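/- Let n, d, h be integers with n, d ≥ 1 and suppose k(n,d) ≥ |r(n,d)| + |h| + 1, where n = k(n,d)·d + r(n,d) with r(n,d) ∈ [-⌊d/2⌋, ⌈d/2⌉-1]. Then every finite sequence z₀, …, z_l of Gaussian integers with |z_{j+1} - z_j| = 1 for all consecutive terms and with z_{j₂} - z_{j₁} = n + i·h for some indices j₁, j₂, contains two terms z_{j₃}, z_{j₄} with z_{j₃} - z_{j₄} = d. -/

import Mathlib

open Finset

/-- A Gaussian integer has norm one exactly when its taxicab length is one. -/
theorem GaussianInt.natAbs_add_natAbs_of_norm_eq_one {w : GaussianInt} (hw : w.norm = 1) :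
    w.re.natAbs + w.im.natAbs = 1 := by
  have h : w.re * w.re + w.im * w.im = 1 := by
    rw [Zsqrtd.norm_def] at hw
    linarith
  have h1 : w.re ≤ 1 := by nlinarith [mul_self_nonneg w.im]
  have h2 : -1 ≤ w.re := by nlinarith [mul_self_nonneg w.im]
  have h3 : w.im ≤ 1 := by nlinarith [mul_self_nonneg w.re]
  have h4 : -1 ≤ w.im := by nlinarith [mul_self_nonneg w.re]
  generalize w.re = x at *
  generalize w.im = y at *
  interval_cases x <;> interval_cases y <;> simp_all

/-- Adjacency in the square lattice. -/
def LatticeAdj (u w : GaussianInt) : Prop :=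
  (w.re - u.re).natAbs + (w.im - u.im).natAbs = 1

theorem LatticeAdj.add_right {u w : GaussianInt} (h : LatticeAdj u w) (c : GaussianInt) :
    LatticeAdj (u + c) (w + c) := by
  simpa [LatticeAdj] using h

/-- Signed count of the crossing of the step from `u` to `w` with the horizontal ray that starts
slightly above and to the right of `p` and points to the right. -/
def stepCrossing (u w p : GaussianInt) : ℤ :=
  if p.re < u.re then
    (if p.im < w.im then 1 else 0) - (if p.im < u.im then 1 else 0)
  else 0

/-- Indicator that `w` lies on the horizontal ray strictly to the right of `p`. -/
def onRay (w p : GaussianInt) : ℤ :=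
  if w.im = p.im ∧ p.re < w.re then 1 else 0

/-- Signed number of crossings of the first `j` steps of `z` with the ray at `p`. -/
def rayCrossing (z : ℕ → GaussianInt) (j : ℕ) (p : GaussianInt) : ℤ :=
  ∑ i ∈ range j, stepCrossing (z i) (z (i + 1)) p

/-- Signed number of crossings of the ray at `p` with the portion of `z` from time `s` to time `t`,
prolonged by one upward step. -/
def sideIndex (z : ℕ → GaussianInt) (s t : ℕ) (p : GaussianInt) : ℤ :=
  rayCrossing z t p - rayCrossing z s p + onRay (z t) p

theorem stepCrossing_right {u w p q : GaussianInt} (h : LatticeAdj u w)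
    (hre : q.re = p.re + 1) (him : q.im = p.im) (hu : u ≠ q) (hw : w ≠ q) :
    stepCrossing u w q = stepCrossing u w p := by
  simp only [ne_eq, Zsqrtd.ext_iff, LatticeAdj] at h hu hw
  unfold stepCrossing
  split_ifs <;> omega

theorem onRay_right {w p q : GaussianInt}
    (hre : q.re = p.re + 1) (him : q.im = p.im) (hw : w ≠ q) : onRay w q = onRay w p := by
  simp only [ne_eq, Zsqrtd.ext_iff] at hw
  unfold onRay
  split_ifs <;> omega

/-- Moving the base point up changes the crossing count of a step by a telescoping term. -/
theorem stepCrossing_up {u w p q : GaussianInt} (h : LatticeAdj u w)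
    (hre : q.re = p.re) (him : q.im = p.im + 1) (hu : u ≠ q) (hw : w ≠ q) :
    stepCrossing u w q - stepCrossing u w p = onRay u q - onRay w q := by
  simp only [ne_eq, Zsqrtd.ext_iff, LatticeAdj] at h hu hw
  unfold stepCrossing onRay
  split_ifs <;> omega

section Walk

variable {z : ℕ → GaussianInt} {l : ℕ}

theorem rayCrossing_right (hz : ∀ j < l, LatticeAdj (z j) (z (j + 1))) {p q : GaussianInt}
    (hre : q.re = p.re + 1) (him : q.im = p.im) (hq : ∀ j ≤ l, z j ≠ q) {j : ℕ} (hj : j ≤ l) :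
    rayCrossing z j q = rayCrossing z j p := by
  refine sum_congr rfl fun i hi => ?_
  have hi := mem_range.1 hi
  exact stepCrossing_right (hz i (by omega)) hre him (hq i (by omega)) (hq _ (by omega))

theorem rayCrossing_up (hz : ∀ j < l, LatticeAdj (z j) (z (j + 1))) {p q : GaussianInt}
    (hre : q.re = p.re) (him : q.im = p.im + 1) (hq : ∀ j ≤ l, z j ≠ q) {j : ℕ} (hj : j ≤ l) :
    rayCrossing z j q - rayCrossing z j p = onRay (z 0) q - onRay (z j) q := by
  unfold rayCrossing
  rw [← sum_sub_distrib, ← sum_range_sub' (fun i => onRay (z i) q)]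
  refine sum_congr rfl fun i hi => ?_
  have hi := mem_range.1 hi
  exact stepCrossing_up (hz i (by omega)) hre him (hq i (by omega)) (hq _ (by omega))

/-- Far to the right of the walk, the side index vanishes. -/
theorem sideIndex_eq_zero {s t : ℕ} (hs : s ≤ l) (ht : t ≤ l) {p : GaussianInt}
    (hp : ∀ j ≤ l, (z j).re < p.re) : sideIndex z s t p = 0 := by
  have key : ∀ j ≤ l, rayCrossing z j p = 0 := fun j hj => sum_eq_zero fun i hi => by
    have := hp i (by have := mem_range.1 hi; omega)
    rw [stepCrossing, if_neg (by omega)]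
  have := hp t ht
  rw [sideIndex, key s hs, key t ht, onRay, if_neg (by omega)]
  rfl

/-- Far to the left of a walk from the bottom to the top of a strip, the side index is one. -/
theorem sideIndex_eq_one {s t : ℕ} (hs : s ≤ l) (ht : t ≤ l) {p : GaussianInt}
    (hp : ∀ j ≤ l, p.re < (z j).re) (hps : (z s).im ≤ p.im) (hpt : p.im ≤ (z t).im) :
    sideIndex z s t p = 1 := by
  have key : ∀ j ≤ l, rayCrossing z j p =
      (if p.im < (z j).im then 1 else 0) - (if p.im < (z 0).im then 1 else 0) := fun j hj => by
    unfold rayCrossing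
    rw [← sum_range_sub (fun i => if p.im < (z i).im then (1 : ℤ) else 0)]
    refine sum_congr rfl fun i hi => ?_
    have := hp i (by have := mem_range.1 hi; omega)
    rw [stepCrossing, if_pos this]
  have := hp t ht
  rw [sideIndex, key s hs, key t ht, onRay]
  split_ifs <;> omega

/-- The side index does not change along a lattice step in the strip that avoids the walk. -/
theorem sideIndex_eq_of_adj (hz : ∀ j < l, LatticeAdj (z j) (z (j + 1))) {s t : ℕ}
    (hs : s ≤ l) (ht : t ≤ l) {p q : GaussianInt} (hpq : LatticeAdj p q)
    (hp : ∀ j ≤ l, z j ≠ p) (hq : ∀ j ≤ l, z j ≠ q)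
    (hps : (z s).im ≤ p.im) (hpt : p.im ≤ (z t).im)
    (hqs : (z s).im ≤ q.im) (hqt : q.im ≤ (z t).im) :
    sideIndex z s t p = sideIndex z s t q := by
  have right : ∀ p q : GaussianInt, q.re = p.re + 1 → q.im = p.im → (∀ j ≤ l, z j ≠ q) →
      sideIndex z s t p = sideIndex z s t q := fun p q hre him hq => by
    rw [sideIndex, sideIndex, rayCrossing_right hz hre him hq hs,
      rayCrossing_right hz hre him hq ht, onRay_right hre him (hq t ht)]
  have up : ∀ p q : GaussianInt, q.re = p.re → q.im = p.im + 1 → (∀ j ≤ l, z j ≠ q) →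
      (z s).im ≤ p.im → q.im ≤ (z t).im →
      sideIndex z s t p = sideIndex z s t q := fun p q hre him hq hps hqt => by
    have h1 := rayCrossing_up hz hre him hq hs
    have h2 := rayCrossing_up hz hre him hq ht
    have h3 : onRay (z s) q = 0 := if_neg (by omega)
    have h4 : onRay (z t) p = 0 := if_neg (by omega)
    unfold sideIndex
    omega
  have : (q.re = p.re + 1 ∧ q.im = p.im) ∨ (p.re = q.re + 1 ∧ p.im = q.im) ∨
      (q.re = p.re ∧ q.im = p.im + 1) ∨ (p.re = q.re ∧ p.im = q.im + 1) := by
    unfold LatticeAdj at hpq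
    omega
  rcases this with ⟨a, b⟩ | ⟨a, b⟩ | ⟨a, b⟩ | ⟨a, b⟩
  · exact right p q a b hq
  · exact (right q p a b hp).symm
  · exact up p q a b hq hps hqt
  · exact (up q p a b hp hqs hpt).symm

/-- The side index is constant along a walk in the strip that avoids `z`. -/
theorem sideIndex_eq_of_walk (hz : ∀ j < l, LatticeAdj (z j) (z (j + 1))) {s t : ℕ}
    (hs : s ≤ l) (ht : t ≤ l) {y : ℕ → GaussianInt} {N : ℕ}
    (hy : ∀ j < N, LatticeAdj (y j) (y (j + 1)))
    (hys : ∀ j ≤ N, (z s).im ≤ (y j).im) (hyt : ∀ j ≤ N, (y j).im ≤ (z t).im)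
    (hyz : ∀ i ≤ N, ∀ j ≤ l, z j ≠ y i) {i : ℕ} (hi : i ≤ N) :
    sideIndex z s t (y i) = sideIndex z s t (y 0) := by
  induction i with
  | zero => rfl
  | succ i ih =>
    rw [← ih (by omega)]
    exact (sideIndex_eq_of_adj hz hs ht (hy i (by omega)) (hyz i (by omega)) (hyz _ hi)
      (hys _ (by omega)) (hyt _ (by omega)) (hys _ hi) (hyt _ hi)).symm

/-- The side index is constant on a horizontal translate that avoids the walk. -/
theorem sideIndex_add_of_disjoint (hz : ∀ j < l, LatticeAdj (z j) (z (j + 1))) {s t : ℕ}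
    (hs : s ≤ l) (ht : t ≤ l) (hmin : ∀ j ≤ l, (z s).im ≤ (z j).im)
    (hmax : ∀ j ≤ l, (z j).im ≤ (z t).im) {D : ℤ}
    (hD : ∀ i ≤ l, ∀ j ≤ l, z j ≠ z i + (D : GaussianInt)) {a b : ℕ} (ha : a ≤ l) (hb : b ≤ l) :
    sideIndex z s t (z a + (D : GaussianInt)) = sideIndex z s t (z b + (D : GaussianInt)) := by
  have key := fun {i : ℕ} (hi : i ≤ l) => sideIndex_eq_of_walk hz hs ht (N := l)
    (y := fun i => z i + (D : GaussianInt))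
    (fun j hj => LatticeAdj.add_right (hz j hj) _)
    (by simpa using hmin) (by simpa using hmax) hD hi
  exact (key ha).trans (key hb).symm

/-- A disjoint translate to the right has side index zero. -/
theorem sideIndex_add_eq_zero (hz : ∀ j < l, LatticeAdj (z j) (z (j + 1))) {s t : ℕ}
    (hs : s ≤ l) (ht : t ≤ l) (hmin : ∀ j ≤ l, (z s).im ≤ (z j).im)
    (hmax : ∀ j ≤ l, (z j).im ≤ (z t).im) {D : ℤ} (hpos : 0 < D)
    (hD : ∀ i ≤ l, ∀ j ≤ l, z j ≠ z i + (D : GaussianInt)) {a : ℕ} (ha : a ≤ l) :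
    sideIndex z s t (z a + (D : GaussianInt)) = 0 := by
  obtain ⟨b, hb, hbmax⟩ := exists_max_image (range (l + 1)) (fun j => (z j).re) ⟨0, by simp⟩
  rw [sideIndex_add_of_disjoint hz hs ht hmin hmax hD ha
    (by have := mem_range.1 hb; omega : b ≤ l)]
  refine sideIndex_eq_zero hs ht fun j hj => ?_
  have := hbmax j (by simp; omega)
  simp only [Zsqrtd.re_add, Zsqrtd.re_intCast]
  omega

/-- A disjoint translate to the left has side index one. -/
theorem sideIndex_add_eq_one (hz : ∀ j < l, LatticeAdj (z j) (z (j + 1))) {s t : ℕ}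
    (hs : s ≤ l) (ht : t ≤ l) (hmin : ∀ j ≤ l, (z s).im ≤ (z j).im)
    (hmax : ∀ j ≤ l, (z j).im ≤ (z t).im) {D : ℤ} (hneg : D < 0)
    (hD : ∀ i ≤ l, ∀ j ≤ l, z j ≠ z i + (D : GaussianInt)) {a : ℕ} (ha : a ≤ l) :
    sideIndex z s t (z a + (D : GaussianInt)) = 1 := by
  obtain ⟨b, hb, hbmin⟩ := exists_min_image (range (l + 1)) (fun j => (z j).re) ⟨0, by simp⟩
  have hbl : b ≤ l := by have := mem_range.1 hb; omega
  rw [sideIndex_add_of_disjoint hz hs ht hmin hmax hD ha hbl]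
  refine sideIndex_eq_one hs ht (fun j hj => ?_) ?_ ?_
  · have := hbmin j (by simp; omega)
    simp only [Zsqrtd.re_add, Zsqrtd.re_intCast]
    omega
  · simpa using hmin b hbl
  · simpa using hmax b hbl

/-- A discrete form of Hopf's chord theorem: a lattice walk that does not realize the difference
`d` does not realize any positive multiple of `d`. -/
theorem ne_add_mul_of_ne_add (hz : ∀ j < l, LatticeAdj (z j) (z (j + 1))) {s t : ℕ}
    (hs : s ≤ l) (ht : t ≤ l) (hmin : ∀ j ≤ l, (z s).im ≤ (z j).im)
    (hmax : ∀ j ≤ l, (z j).im ≤ (z t).im) {d : ℤ} (hd : 0 < d)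
    (hav : ∀ i ≤ l, ∀ j ≤ l, z j ≠ z i + (d : GaussianInt)) (k : ℕ) :
    ∀ i ≤ l, ∀ j ≤ l, z j ≠ z i + (((k + 1 : ℤ) * d : ℤ) : GaussianInt) := by
  induction k with
  | zero => simpa using hav
  | succ k ih =>
    intro i hi j hj h
    have h0 := sideIndex_add_eq_zero hz hs ht hmin hmax (by positivity) ih hi
    have h1 := sideIndex_add_eq_one hz hs ht hmin hmax (D := -d) (by omega)
      (fun i hi j hj h => hav j hj i hi (by rw [h]; push_cast; ring)) hj
    have e : z j + ((-d : ℤ) : GaussianInt) = z i + (((k + 1 : ℤ) * d : ℤ) : GaussianInt) := by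
      rw [h]; push_cast; ring
    rw [e, h0] at h1
    exact zero_ne_one h1

end Walk

/-- Two lattice points are joined by a taxicab geodesic, whose heights stay between theirs. -/
theorem exists_geodesic (u w : GaussianInt) :
    ∃ y : ℕ → GaussianInt, y 0 = u ∧
      y ((w.re - u.re).natAbs + (w.im - u.im).natAbs) = w ∧
      (∀ j < (w.re - u.re).natAbs + (w.im - u.im).natAbs, LatticeAdj (y j) (y (j + 1))) ∧
      ∀ j ≤ (w.re - u.re).natAbs + (w.im - u.im).natAbs,
        min u.im w.im ≤ (y j).im ∧ (y j).im ≤ max u.im w.im := by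
  refine ⟨fun j =>
    ⟨if u.re ≤ w.re then u.re + min j (w.re - u.re).natAbs else u.re - min j (w.re - u.re).natAbs,
     if u.im ≤ w.im then u.im + (j - (w.re - u.re).natAbs : ℕ)
      else u.im - (j - (w.re - u.re).natAbs : ℕ)⟩, ?_, ?_, ?_, ?_⟩
  · ext <;> simp
  · ext <;> simp only <;> split_ifs <;> omega
  · intro j hj
    simp only [LatticeAdj]
    split_ifs <;> omega
  · intro j hj
    simp only
    split_ifs <;> omega

/-- Generalized unavoidability: if k(n,d) ≥ |r(n,d)| + |h| + 1 then every
unit-step walk realizing the complex difference n + ih realizes d. -/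
theorem stmt_16 (n d h : ℤ) (hn : 1 ≤ n) (hd : 1 ≤ d)
    (k r : ℤ) (hkr : n = k * d + r)
    (hr1 : -(d / 2) ≤ r) (hr2 : r ≤ (d + 1) / 2 - 1)
    (hk : k ≥ |r| + |h| + 1)
    (l : ℕ) (z : ℕ → GaussianInt)
    (hstep : ∀ j < l, (z (j + 1) - z j).norm = 1)
    (hreal : ∃ j₂ j₁, j₂ ≤ l ∧ j₁ ≤ l ∧ z j₂ - z j₁ = (⟨n, h⟩ : GaussianInt)) :
    ∃ j₃ j₄, j₃ ≤ l ∧ j₄ ≤ l ∧ z j₃ - z j₄ = (d : GaussianInt) := by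
  by_contra hcon
  obtain ⟨b, a, hb, ha, hab⟩ := hreal
  have hz : ∀ j < l, LatticeAdj (z j) (z (j + 1)) := fun j hj => by
    simpa [LatticeAdj] using GaussianInt.natAbs_add_natAbs_of_norm_eq_one (hstep j hj)
  have hav : ∀ i ≤ l, ∀ j ≤ l, z j ≠ z i + (d : GaussianInt) := fun i hi j hj e =>
    hcon ⟨j, i, hj, hi, by rw [e]; ring⟩
  obtain ⟨s, hs, hmin⟩ := exists_min_image (range (l + 1)) (fun j => (z j).im) ⟨0, by simp⟩
  obtain ⟨t, ht, hmax⟩ := exists_max_image (range (l + 1)) (fun j => (z j).im) ⟨0, by simp⟩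
  simp only [mem_range, Nat.lt_succ_iff] at hs ht hmin hmax
  have hdis : ∀ m : ℤ, 0 < m → ∀ i ≤ l, ∀ j ≤ l, z j ≠ z i + ((m * d : ℤ) : GaussianInt) := by
    intro m hm
    obtain ⟨m, rfl⟩ : ∃ m' : ℕ, m = m' + 1 := ⟨(m - 1).toNat, by omega⟩
    exact ne_add_mul_of_ne_add hz hs ht hmin hmax (by omega) hav m
  have hzb : z b = z a + ⟨n, h⟩ := by rw [← hab]; ring
  obtain ⟨y, hy0, hyN, hy, hyim⟩ := exists_geodesic (z a + ((k * d : ℤ) : GaussianInt)) (z b)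
  have hN : ((z b).re - (z a + ((k * d : ℤ) : GaussianInt)).re).natAbs +
      ((z b).im - (z a + ((k * d : ℤ) : GaussianInt)).im).natAbs = r.natAbs + h.natAbs := by
    rw [hzb]
    simp only [Zsqrtd.re_add, Zsqrtd.im_add, Zsqrtd.re_intCast, Zsqrtd.im_intCast]
    congr 2 <;> omega
  rw [hN] at hyN hy hyim
  have hyim' : ∀ j ≤ r.natAbs + h.natAbs, (z s).im ≤ (y j).im ∧ (y j).im ≤ (z t).im := by
    intro j hj
    have := hyim j hj
    have := hmin a ha
    have := hmin b hb
    have := hmax a ha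
    have := hmax b hb
    simp only [Zsqrtd.im_add, Zsqrtd.im_intCast] at *
    omega
  have hhit : ∀ m ∈ Icc 0 k, ∃ i ≤ r.natAbs + h.natAbs, ∃ c ≤ l,
      y i = z c + ((m * d : ℤ) : GaussianInt) := by
    intro m hm
    obtain ⟨hm0, hmk⟩ := mem_Icc.1 hm
    rcases hm0.eq_or_lt with rfl | hm0
    · exact ⟨_, le_rfl, b, hb, by simp [hyN]⟩
    rcases hmk.eq_or_lt with rfl | hmk
    · exact ⟨0, by omega, a, ha, hy0⟩
    by_contra! hmiss
    have hconst := sideIndex_eq_of_walk hz hs ht (N := r.natAbs + h.natAbs)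
      (y := fun i => y i + ((-(m * d) : ℤ) : GaussianInt))
      (fun j hj => LatticeAdj.add_right (hy j hj) _)
      (by simpa using fun j hj => (hyim' j hj).1) (by simpa using fun j hj => (hyim' j hj).2)
      (fun i hi j hj e => hmiss i hi j hj (by rw [e]; push_cast; ring)) le_rfl
    have h1 := sideIndex_add_eq_one hz hs ht hmin hmax (D := -(m * d)) (by nlinarith)
      (fun i hi j hj e => hdis m hm0 j hj i hi (by rw [e]; push_cast; ring)) hb
    have h0 := sideIndex_add_eq_zero hz hs ht hmin hmax (D := (k - m) * d)
      (mul_pos (by omega) (by omega)) (hdis (k - m) (by omega)) ha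
    have e : y 0 + ((-(m * d) : ℤ) : GaussianInt) = z a + (((k - m) * d : ℤ) : GaussianInt) := by
      rw [hy0]; push_cast; ring
    simp only [hyN, e, h0, h1] at hconst
    exact one_ne_zero hconst
  choose! f hf c hc hfc using hhit
  have hinj : ∀ m ∈ Icc 0 k, ∀ m' ∈ Icc 0 k, m < m' → f m ≠ f m' := by
    intro m hm m' hm' hlt e
    refine hdis (m' - m) (by omega) (c m') (hc m' hm') (c m) (hc m hm) ?_
    have := hfc m hm
    rw [e, hfc m' hm'] at this
    rw [← sub_eq_iff_eq_add.2 this]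
    push_cast
    ring
  have hcard := card_le_card_of_injOn (s := Icc 0 k) (t := range (r.natAbs + h.natAbs + 1)) f
    (fun m hm => by simpa [Nat.lt_succ_iff] using hf m hm)
    (fun m hm m' hm' e => by
      rcases lt_trichotomy m m' with hlt | heq | hlt
      · exact (hinj m hm m' hm' hlt e).elim
      · exact heq
      · exact (hinj m' hm' m hm hlt e.symm).elim)
  rw [Int.card_Icc, card_range] at hcard
  rw [Int.abs_eq_natAbs, Int.abs_eq_natAbs] at hk
  omega
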